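/- Let 1 ≤ p < ∞ and, for each μ > 1, let B_{w_μ} : ℓ_p → ℓ_p denote the unilateral weighted backward shift with weight sequence w_μ = (1 + μ/n)_{n≥1}. Then there exists a closed infinite-dimensional subspace Y of ℓ_p such that every nonzero vector of Y is U-frequently hypercyclic for B_{w_μ} for every μ > 1, and no vector of Y is frequently hypercyclic for B_{w_μ} for any μ > 1. -/

import Mathlib

/-!
Write `P_μ(m) = ∏_{i ≤ m} (1 + μ/i)`, so that `(B_μ^n x)_j = P_μ(n+j) / P_μ(j) * x_{n+j}`. For
`μ > 1` the series `∑ 1 / P_μ(m)` converges (`summable_inv_wprod`).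

The subspace consists of the `x ∈ ℓ_p` that are, on each class of a colouring `c` of `ℕ`, a
multiple of one fixed sequence `v` (`exists_pattern`). It is an intersection of kernels of
continuous functionals, hence closed, and it contains the restriction of `v` to every colour
class, hence is infinite-dimensional.

The sequence `v` is built in stages, one for each triple (colour `i`, period `D`, finitely
supported rational target `y`), every triple recurring infinitely often. A stage is a run of scales
`[4^l, 4^(l+1))`; on the scale `l` one puts `v_m = y_t P_θ(t) / P_θ(m)`, where `t = m mod D` and
`θ = θ_l`. Applying `B_θ^n` with `D ∣ n` turns this into `y` plus later copies of `y` damped by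
`1 / P_θ`. Within a stage `θ_l` starts just above `1` and advances by `ε / (l+1)`. Since the
harmonic series diverges, a long enough stage passes every `μ` of a large compact interval; at the
passage `|μ - θ_l| ≤ ε / (l+1)`, and as `∑_{i ≤ m} 1/i` is at most a multiple of `l+1` on the scale,
`P_μ(m) / P_θ(m)` is within `e^{O(ε)}` of `1` there. So a single `v` serves all `μ` at once.

If `x` is a nonzero member of the subspace, it equals `a v` with `a ≠ 0` on some colour class, and
at such a scale `B_μ^n x` is close to `a y` for all multiples `n` of `D` in `[4^l, 2 * 4^l]`
(`block_estimate`). The coordinates of `x` beyond `4^(l+1) ≥ 2n` contribute at most `e^μ` times the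
norm of the tail of `x`, whatever the other colours are. Hence every open set is visited with upper
density at least `1 / (4D)`.

The stages with target `y = 0` are gaps of unbounded logarithmic length common to all members of
the subspace. During a gap the first coordinate of `B_μ^n x` vanishes, so the open set of vectors
with nonzero first coordinate is visited with lower density zero.
-/

open Filter Set
open scoped ENNReal

/-- The upper asymptotic density of a set of natural numbers. -/
noncomputable def upperDensity (A : Set ℕ) : ℝ :=
  Filter.limsup (fun N : ℕ => ((A ∩ Set.Iic N).ncard : ℝ) / (N + 1)) Filter.atTop

/-- The lower asymptotic density of a set of natural numbers. -/
noncomputable def lowerDensity (A : Set ℕ) : ℝ :=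
  Filter.liminf (fun N : ℕ => ((A ∩ Set.Iic N).ncard : ℝ) / (N + 1)) Filter.atTop

/-- `x` is a hypercyclic vector for `T`: its orbit under `T` is dense. -/
def IsHypercyclicVector {X : Type*} [NormedAddCommGroup X] [NormedSpace ℝ X]
    (T : X →L[ℝ] X) (x : X) : Prop :=
  Dense (Set.range fun n : ℕ => (T ^ n) x)

/-- `x` is a `𝒰`-frequently hypercyclic vector for `T`: every nonempty open set is
visited by the orbit along a set of times of positive upper density. -/
def IsUFreqHypercyclicVector {X : Type*} [NormedAddCommGroup X] [NormedSpace ℝ X]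
    (T : X →L[ℝ] X) (x : X) : Prop :=
  ∀ U : Set X, IsOpen U → U.Nonempty → 0 < upperDensity {n : ℕ | (T ^ n) x ∈ U}

/-- `x` is a frequently hypercyclic vector for `T`: every nonempty open set is
visited by the orbit along a set of times of positive lower density. -/
def IsFreqHypercyclicVector {X : Type*} [NormedAddCommGroup X] [NormedSpace ℝ X]
    (T : X →L[ℝ] X) (x : X) : Prop :=
  ∀ U : Set X, IsOpen U → U.Nonempty → 0 < lowerDensity {n : ℕ | (T ^ n) x ∈ U}

/-! ### Products of the weights -/

/-- The product `∏_{i=1}^m (1 + μ/i)` of the first `m` weights; it governs the iterates of the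
shift, `(B_μ^n x)_j = P_μ(n+j) / P_μ(j) * x_{n+j}`. -/
noncomputable def wprod (μ : ℝ) (m : ℕ) : ℝ := ∏ i ∈ Finset.range m, (1 + μ / ((i : ℝ) + 1))

/-- The `m`-th harmonic number, as a real number. -/
noncomputable def harm (m : ℕ) : ℝ := ∑ i ∈ Finset.range m, 1 / ((i : ℝ) + 1)

lemma wprod_zero (μ : ℝ) : wprod μ 0 = 1 := by simp [wprod]

lemma wprod_succ (μ : ℝ) (m : ℕ) : wprod μ (m + 1) = wprod μ m * (1 + μ / ((m : ℝ) + 1)) := by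
  simp [wprod, Finset.prod_range_succ]

lemma wprod_pos {μ : ℝ} (hμ : 0 ≤ μ) (m : ℕ) : 0 < wprod μ m :=
  Finset.prod_pos fun i _ => by positivity

lemma harm_succ (m : ℕ) : harm (m + 1) = harm m + 1 / ((m : ℝ) + 1) := by
  simp [harm, Finset.sum_range_succ]

lemma harm_mono : Monotone harm :=
  monotone_nat_of_le_succ fun m => by rw [harm_succ]; have : (0:ℝ) ≤ 1 / ((m:ℝ) + 1) := by positivity
                                      linarith

lemma tendsto_harm : Tendsto harm atTop atTop := Real.tendsto_sum_range_one_div_nat_succ_atTop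

lemma harm_four_pow (l : ℕ) : harm (4 ^ l) ≤ 3 * l + 1 := by
  induction l with
  | zero => simp [harm]
  | succ l ih =>
    have h1 : harm (4 ^ (l + 1)) = harm (4 ^ l)
        + ∑ i ∈ Finset.range (3 * 4 ^ l), 1 / (((4 ^ l + i : ℕ) : ℝ) + 1) := by
      have : 4 ^ (l + 1) = 4 ^ l + 3 * 4 ^ l := by ring
      rw [this, harm, harm, Finset.sum_range_add]
    have h2 : ∑ i ∈ Finset.range (3 * 4 ^ l), 1 / (((4 ^ l + i : ℕ) : ℝ) + 1)
        ≤ ∑ i ∈ Finset.range (3 * 4 ^ l), 1 / ((4 : ℝ) ^ l) := by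
      refine Finset.sum_le_sum fun i _ => ?_
      apply one_div_le_one_div_of_le (by positivity)
      push_cast
      have : (0 : ℝ) ≤ i := by positivity
      linarith
    have h3 : ∑ i ∈ Finset.range (3 * 4 ^ l), 1 / ((4 : ℝ) ^ l) = 3 := by
      rw [Finset.sum_const, Finset.card_range, nsmul_eq_mul]; push_cast; field_simp
    push_cast
    linarith

/-- If `n ≤ j` then shifting by `n` expands the coordinate `j` by at most the factor `e^μ`. -/
lemma wprod_add_le {μ : ℝ} (hμ : 0 ≤ μ) {n j : ℕ} (h : n ≤ j) :
    wprod μ (n + j) ≤ Real.exp μ * wprod μ j := by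
  have h1 : wprod μ (n + j) = wprod μ j * ∏ i ∈ Finset.range n, (1 + μ / (((j + i : ℕ) : ℝ) + 1)) := by
    rw [add_comm, wprod, wprod, Finset.prod_range_add]
  have h2 : ∏ i ∈ Finset.range n, (1 + μ / (((j + i : ℕ) : ℝ) + 1))
      ≤ ∏ i ∈ Finset.range n, Real.exp (μ / ((j : ℝ) + 1)) := by
    refine Finset.prod_le_prod (fun i _ => by positivity) fun i _ => ?_
    refine le_trans ?_ (Real.add_one_le_exp _)
    rw [add_comm]
    gcongr
    linarith [(Nat.cast_nonneg i : (0:ℝ) ≤ i)]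
  have h3 : ∏ i ∈ Finset.range n, Real.exp (μ / ((j : ℝ) + 1)) ≤ Real.exp μ := by
    rw [Finset.prod_const, Finset.card_range, ← Real.exp_nat_mul]
    apply Real.exp_le_exp.2
    have : (n : ℝ) ≤ j := by exact_mod_cast h
    rw [← mul_div_assoc, div_le_iff₀ (by positivity)]
    nlinarith
  rw [h1, mul_comm]
  exact mul_le_mul_of_nonneg_right (h2.trans h3) (wprod_pos hμ j).le

/-- The quotients `P_μ(m) / P_θ(m)` increase with `m` when `θ ≤ μ`. -/
lemma ratio_mono {θ μ : ℝ} (hθ : 0 ≤ θ) (h : θ ≤ μ) :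
    Monotone fun m => wprod μ m / wprod θ m := by
  refine monotone_nat_of_le_succ fun m => ?_
  have hm := wprod_pos hθ m
  have hm' := wprod_pos (hθ.trans h) m
  rw [wprod_succ, wprod_succ, mul_div_mul_comm]
  apply le_mul_of_one_le_right (by positivity)
  rw [one_le_div (by positivity)]
  gcongr

lemma one_le_ratio {θ μ : ℝ} (hθ : 0 ≤ θ) (h : θ ≤ μ) (m : ℕ) : 1 ≤ wprod μ m / wprod θ m := by
  have := ratio_mono hθ h (Nat.zero_le m)
  simpa [wprod_zero] using this

lemma ratio_le {θ μ : ℝ} (hθ : 0 ≤ θ) (h : θ ≤ μ) (m : ℕ) :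
    wprod μ m / wprod θ m ≤ Real.exp ((μ - θ) * harm m) := by
  induction m with
  | zero => simp [wprod_zero, harm]
  | succ m ih =>
    have hm := wprod_pos hθ m
    have hm' := wprod_pos (hθ.trans h) m
    rw [wprod_succ, wprod_succ, mul_div_mul_comm, harm_succ, mul_add, Real.exp_add]
    refine mul_le_mul ih ?_ (by have := hθ.trans h; positivity) (by positivity)
    refine le_trans ?_ (Real.add_one_le_exp _)
    rw [div_le_iff₀ (by positivity)]
    have h0 : (0:ℝ) < (m:ℝ) + 1 := by positivity
    have h1 : (μ - θ) * (1 / ((m:ℝ) + 1)) = μ / ((m:ℝ) + 1) - θ / ((m:ℝ) + 1) := by ring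
    have h2 : θ / ((m:ℝ) + 1) ≤ μ / ((m:ℝ) + 1) := by gcongr
    have h3 : 0 ≤ θ / ((m:ℝ) + 1) := by positivity
    rw [h1]
    nlinarith

/-- For `μ > 1` the reciprocals of the weight products are summable, because
`(μ-1)/(1+μ) / P_μ(j) ≤ (j+1)/P_μ(j) - (j+2)/P_μ(j+1)` telescopes. -/
lemma summable_inv_wprod {μ : ℝ} (hμ : 1 < μ) : Summable fun m => 1 / wprod μ m := by
  have key : ∀ n : ℕ, ∑ j ∈ Finset.range n, 1 / wprod μ j
      ≤ (1 + μ) / (μ - 1) * (1 - ((n : ℝ) + 1) / wprod μ n) := by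
    intro n
    induction n with
    | zero => simp [wprod_zero]
    | succ n ih =>
      rw [Finset.sum_range_succ]
      have hp := wprod_pos (by linarith : (0:ℝ) ≤ μ) n
      have hn : (0:ℝ) < (n:ℝ) + 1 := by positivity
      have hq : 1 + μ / ((n:ℝ) + 1) = ((n:ℝ) + 1 + μ) / ((n:ℝ) + 1) := by field_simp
      have e : (1 + μ) / (μ - 1) * (1 - (((n + 1 : ℕ) : ℝ) + 1) / wprod μ (n + 1))
          = (1 + μ) / (μ - 1) * (1 - ((n : ℝ) + 1) / wprod μ n)
            + (1 / wprod μ n) * ((1 + μ) * ((n:ℝ) + 1) / ((n:ℝ) + 1 + μ)) := by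
        rw [wprod_succ, hq]
        have : μ - 1 ≠ 0 := by linarith
        have : (n:ℝ) + 1 + μ ≠ 0 := by positivity
        push_cast
        field_simp
        ring
      have h1 : 1 ≤ (1 + μ) * ((n:ℝ) + 1) / ((n:ℝ) + 1 + μ) := by
        rw [one_le_div (by positivity)]
        nlinarith [(Nat.cast_nonneg n : (0:ℝ) ≤ n)]
      have h2 : 1 / wprod μ n ≤ (1 / wprod μ n) * ((1 + μ) * ((n:ℝ) + 1) / ((n:ℝ) + 1 + μ)) :=
        le_mul_of_one_le_right (by positivity) h1
      rw [e]
      linarith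
  refine summable_of_sum_range_le (c := (1 + μ) / (μ - 1))
    (fun n => (one_div_pos.2 (wprod_pos (by linarith) n)).le) fun n => (key n).trans ?_
  have hp := wprod_pos (by linarith : (0:ℝ) ≤ μ) n
  have h0 : 0 ≤ (1 + μ) / (μ - 1) := div_nonneg (by linarith) (by linarith)
  have h1 : 0 ≤ ((n:ℝ) + 1) / wprod μ n := by positivity
  nlinarith

/-! ### The common sequence -/

/-- The `ℓ_1` norm of `y` weighted by `P_μ`; it bounds every `|y_t| P_μ(t)`. -/
noncomputable def cst (y : ℕ →₀ ℚ) (μ : ℝ) : ℝ := ∑ t ∈ y.support, |(y t : ℝ)| * wprod μ t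

lemma cst_nonneg (y : ℕ →₀ ℚ) {μ : ℝ} (hμ : 0 ≤ μ) : 0 ≤ cst y μ :=
  Finset.sum_nonneg fun t _ => mul_nonneg (abs_nonneg _) (wprod_pos hμ t).le

lemma le_cst (y : ℕ →₀ ℚ) {μ : ℝ} (hμ : 0 ≤ μ) (t : ℕ) : |(y t : ℝ)| * wprod μ t ≤ cst y μ := by
  by_cases h : t ∈ y.support
  · exact Finset.single_le_sum (f := fun t => |(y t : ℝ)| * wprod μ t)
      (fun t _ => mul_nonneg (abs_nonneg _) (wprod_pos hμ t).le) h
  · rw [Finsupp.notMem_support_iff.1 h]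
    simpa using cst_nonneg y hμ

lemma exists_freq_enum (α : Type*) [Countable α] [Nonempty α] :
    ∃ d : ℕ → α, ∀ a, ∀ S, ∃ s ≥ S, d s = a := by
  obtain ⟨q, hq⟩ := exists_surjective_nat α
  refine ⟨fun s => q (Nat.unpair s).1, fun a S => ?_⟩
  obtain ⟨k, rfl⟩ := hq a
  exact ⟨Nat.pair k S, Nat.right_le_pair k S, by simp⟩

/-- The scale `[4^l, 4^(l+1))` belongs to the stage `s` with `L s ≤ l < L (s+1)`. -/
def stage (L : ℕ → ℕ) (l : ℕ) : ℕ := Nat.findGreatest (fun s => L s ≤ l) l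

lemma stage_eq {L : ℕ → ℕ} (hL : StrictMono L) {l s : ℕ} (h1 : L s ≤ l) (h2 : l < L (s + 1)) :
    stage L l = s := by
  apply le_antisymm
  · by_contra! h
    have h0 : stage L l ≠ 0 := by omega
    have h3 : L (stage L l) ≤ l := Nat.findGreatest_of_ne_zero (P := fun s => L s ≤ l) rfl h0
    have h4 := hL.monotone (Nat.succ_le_of_lt h)
    simp only [Nat.succ_eq_add_one] at h4
    omega
  · exact Nat.le_findGreatest (hL.le_apply.trans h1) h1

/-- The exponent used at scale `l` of a stage `s` that starts at scale `a`: it starts at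
`1 + 1/(s+1)` and grows like `log l / (s+1)`. -/
noncomputable def expo (s a l : ℕ) : ℝ := 1 + 1 / ((s : ℝ) + 1) * (1 + harm l - harm a)

lemma le_expo (s : ℕ) {a l : ℕ} (h : a ≤ l) : 1 + 1 / ((s : ℝ) + 1) ≤ expo s a l := by
  have := harm_mono h
  have h0 : (0:ℝ) ≤ 1 / ((s:ℝ) + 1) := by positivity
  unfold expo
  nlinarith

/-- A stage started at scale `a` can be ended at a scale `b` that is late enough for its exponents
to exceed `s + 1` and for the next stage, started at `b`, to have small `ℓ_1` norm. -/
lemma exists_stage_end (y : ℕ → ℕ →₀ ℚ) (s a : ℕ) : ∃ b : ℕ, a + s + 1 ≤ b ∧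
    (s : ℝ) + 1 ≤ expo s a b ∧
    cst (y (s + 1)) (1 + 1 / ((s + 1 : ℕ) + 1 : ℝ)) *
      ∑' m, 1 / wprod (1 + 1 / ((s + 1 : ℕ) + 1 : ℝ)) (m + 4 ^ b) ≤ (1 / 2) ^ (s + 1) := by
  have e1 : ∀ᶠ b : ℕ in atTop, a + s + 1 ≤ b := eventually_ge_atTop _
  have e2 : ∀ᶠ b : ℕ in atTop, (s : ℝ) + 1 ≤ expo s a b := by
    have : Tendsto (fun b => expo s a b) atTop atTop := by
      unfold expo
      apply tendsto_atTop_add_const_left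
      apply Tendsto.const_mul_atTop (by positivity)
      apply tendsto_atTop_add_const_right
      exact tendsto_atTop_add_const_left _ _ tendsto_harm
    exact this.eventually_ge_atTop _
  have e3 : ∀ᶠ b : ℕ in atTop, cst (y (s + 1)) (1 + 1 / ((s + 1 : ℕ) + 1 : ℝ)) *
      ∑' m, 1 / wprod (1 + 1 / ((s + 1 : ℕ) + 1 : ℝ)) (m + 4 ^ b) ≤ (1 / 2) ^ (s + 1) := by
    have h1 := tendsto_sum_nat_add fun m => 1 / wprod (1 + 1 / ((s + 1 : ℕ) + 1 : ℝ)) m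
    have h2 : Tendsto (fun b : ℕ => 4 ^ b) atTop atTop :=
      tendsto_pow_atTop_atTop_of_one_lt (by norm_num)
    have h3 := (h1.comp h2).const_mul (cst (y (s + 1)) (1 + 1 / ((s + 1 : ℕ) + 1 : ℝ)))
    rw [mul_zero] at h3
    exact h3.eventually_le_const (by positivity)
  exact (e1.and (e2.and e3)).exists

lemma summable_of_stage_bounds (v : ℕ → ℝ) (N : ℕ → ℕ) (hN : StrictMono N) (C η : ℕ → ℝ)
    (hC : ∀ s, 0 ≤ C s) (hη : ∀ s, 1 < η s)
    (hb : ∀ s m, N s ≤ m → m < N (s + 1) → |v m| ≤ C s * (1 / wprod (η s) m))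
    (ht : ∀ s, C (s + 1) * ∑' m, 1 / wprod (η (s + 1)) (m + N (s + 1)) ≤ (1 / 2) ^ (s + 1)) :
    Summable fun m => |v m| := by
  have hstep : ∀ s, ∑ m ∈ Finset.Ico (N (s + 1)) (N (s + 2)), |v m| ≤ (1 / 2) ^ (s + 1) := by
    intro s
    have hη' : 0 ≤ η (s + 1) := by linarith [hη (s + 1)]
    calc ∑ m ∈ Finset.Ico (N (s + 1)) (N (s + 2)), |v m|
        ≤ ∑ m ∈ Finset.Ico (N (s + 1)) (N (s + 2)), C (s + 1) * (1 / wprod (η (s + 1)) m) :=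
          Finset.sum_le_sum fun m hm =>
            hb (s + 1) m (Finset.mem_Ico.1 hm).1 (Finset.mem_Ico.1 hm).2
      _ = C (s + 1) * ∑ m ∈ Finset.range (N (s + 2) - N (s + 1)),
            1 / wprod (η (s + 1)) (m + N (s + 1)) := by
          rw [← Finset.mul_sum, Finset.sum_Ico_eq_sum_range]
          simp_rw [add_comm (N (s + 1))]
      _ ≤ C (s + 1) * ∑' m, 1 / wprod (η (s + 1)) (m + N (s + 1)) := by
          refine mul_le_mul_of_nonneg_left ?_ (hC _)
          have h := (summable_nat_add_iff (N (s + 1))).2 (summable_inv_wprod (hη (s + 1)))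
          exact h.sum_le_tsum _ fun m _ => (one_div_pos.2 (wprod_pos hη' _)).le
      _ ≤ _ := ht s
  have hsum : ∀ s, ∑ m ∈ Finset.range (N (s + 1)), |v m|
      ≤ ∑ m ∈ Finset.range (N 1), |v m| + (1 - (1 / 2) ^ s) := by
    intro s
    induction s with
    | zero => simp
    | succ s ih =>
      have h := hstep s
      rw [← Finset.sum_range_add_sum_Ico _ (hN.monotone (Nat.le_succ (s + 1)))]
      have h2 : (1 / 2 : ℝ) ^ s = 2 * (1 / 2) ^ (s + 1) := by ring
      have h3 : Nat.succ (s + 1) = s + 2 := rfl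
      rw [h3]
      linarith
  refine summable_of_sum_range_le (c := ∑ m ∈ Finset.range (N 1), |v m| + 1)
    (fun m => abs_nonneg _) fun n => ?_
  have h1 : n ≤ N (n + 1) := (Nat.le_succ n).trans hN.le_apply
  refine (Finset.sum_le_sum_of_subset_of_nonneg (Finset.range_mono h1)
    fun _ _ _ => abs_nonneg _).trans ((hsum n).trans ?_)
  have : (0:ℝ) ≤ (1 / 2) ^ n := by positivity
  linarith

/-- The sequence `v`, coloured by `c`, carries all coordinates of the subspace. For every colour
`i`, period `D`, target `y` and parameter `μ > 1` there are arbitrarily late scales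
`[4^l, 4^(l+1))` of colour `i` on which `v` is the `D`-periodic repetition of `y` pulled back by a
shift `B_θ` with `θ ≤ μ` and `μ - θ` tiny compared with `1/l`; such scales exist because the
exponents in a stage advance by steps of order `1/l`, whose sum diverges. On arbitrarily long runs
of scales `v` vanishes. -/
lemma exists_pattern : ∃ (v : ℕ → ℝ) (c : ℕ → ℕ), Summable (fun m => |v m|) ∧
    (∀ (i D : ℕ) (y : ℕ →₀ ℚ) (μ δ : ℝ) (K : ℕ), 1 < μ → 0 < δ →
      ∃ l ≥ K, ∃ θ, 0 ≤ θ ∧ θ ≤ μ ∧ (μ - θ) * ((l : ℝ) + 1) ≤ δ ∧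
        ∀ m, 4 ^ l ≤ m → m < 4 ^ (l + 1) →
          c m = i ∧ v m = (y (m % D) : ℝ) * wprod θ (m % D) / wprod θ m) ∧
    (∀ K : ℕ, ∃ a b, K ≤ a ∧ a + K ≤ b ∧ ∀ m, 4 ^ a ≤ m → m < 4 ^ b → v m = 0) := by
  obtain ⟨d, hd⟩ := exists_freq_enum (ℕ × ℕ × (ℕ →₀ ℚ))
  choose F hF using exists_stage_end fun s => (d s).2.2
  -- stage `s` occupies the scales from `L s` to `L (s + 1)`
  obtain ⟨L, hL'⟩ : ∃ L : ℕ → ℕ, ∀ s, L s + s + 1 ≤ L (s + 1) ∧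
      (s : ℝ) + 1 ≤ expo s (L s) (L (s + 1)) ∧
      cst (d (s + 1)).2.2 (1 + 1 / ((s + 1 : ℕ) + 1 : ℝ)) *
        ∑' m, 1 / wprod (1 + 1 / ((s + 1 : ℕ) + 1 : ℝ)) (m + 4 ^ L (s + 1)) ≤ (1 / 2) ^ (s + 1) :=
    ⟨fun s => Nat.rec 0 (fun s a => F s a) s, fun s => hF s _⟩
  have hL1 : ∀ s, L s + s + 1 ≤ L (s + 1) := fun s => (hL' s).1
  have hL2 := fun s => (hL' s).2.1
  have hL3 := fun s => (hL' s).2.2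
  clear hL' hF
  have hL : StrictMono L := strictMono_nat_of_lt_succ fun s => by have := hL1 s; omega
  -- the values of `v` and `c` on a scale inside a stage
  obtain ⟨v, c, hv⟩ : ∃ (v : ℕ → ℝ) (c : ℕ → ℕ), ∀ s l m, L s ≤ l → l < L (s + 1) →
      4 ^ l ≤ m → m < 4 ^ (l + 1) →
      c m = (d s).1 ∧ v m = ((d s).2.2 (m % (d s).2.1) : ℝ) *
        wprod (expo s (L s) l) (m % (d s).2.1) / wprod (expo s (L s) l) m := by
    refine ⟨fun m =>
      let s := stage L (Nat.log 4 m)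
      let θ := expo s (L s) (Nat.log 4 m)
      ((d s).2.2 (m % (d s).2.1) : ℝ) * wprod θ (m % (d s).2.1) / wprod θ m,
      fun m => (d (stage L (Nat.log 4 m))).1, ?_⟩
    intro s l m h1 h2 h3 h4
    have hl : Nat.log 4 m = l := Nat.log_eq_of_pow_le_of_lt_pow h3 h4
    have hs := stage_eq hL h1 h2
    simp only [hl, hs, and_self]
  -- the same with the scale of `m` left implicit
  have hv' : ∀ s m, 4 ^ L s ≤ m → m < 4 ^ L (s + 1) → ∃ l, L s ≤ l ∧
      v m = ((d s).2.2 (m % (d s).2.1) : ℝ) *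
        wprod (expo s (L s) l) (m % (d s).2.1) / wprod (expo s (L s) l) m := by
    intro s m h1 h2
    have hm : m ≠ 0 := by have : 0 < 4 ^ L s := by positivity
                          omega
    have h3 := Nat.pow_log_le_self 4 hm
    have h4 := Nat.lt_pow_succ_log_self (b := 4) (by norm_num) m
    have h5 : L s ≤ Nat.log 4 m := by
      have := (Nat.pow_lt_pow_iff_right (a := 4) (by norm_num)).1 (h1.trans_lt h4); omega
    have h6 : Nat.log 4 m < L (s + 1) :=
      (Nat.pow_lt_pow_iff_right (a := 4) (by norm_num)).1 (h3.trans_lt h2)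
    exact ⟨_, h5, (hv s _ m h5 h6 h3 h4).2⟩
  have hbound : ∀ s m, 4 ^ L s ≤ m → m < 4 ^ L (s + 1) →
      |v m| ≤ cst (d s).2.2 (1 + 1 / ((s : ℝ) + 1)) * (1 / wprod (1 + 1 / ((s : ℝ) + 1)) m) := by
    intro s m h1 h2
    obtain ⟨l, hl, e⟩ := hv' s m h1 h2
    have hη : (0:ℝ) ≤ 1 + 1 / ((s : ℝ) + 1) := by positivity
    have hle := le_expo s hl
    set θ := expo s (L s) l
    set η := 1 + 1 / ((s : ℝ) + 1)
    set t := m % (d s).2.1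
    have hθ := hη.trans hle
    have hr := ratio_mono hη hle (Nat.mod_le m (d s).2.1)
    have a1 := wprod_pos hθ m
    have a2 := wprod_pos hθ t
    have a3 := wprod_pos hη m
    have a4 := wprod_pos hη t
    have hr' : wprod θ t / wprod θ m ≤ wprod η t / wprod η m := by
      simp only at hr
      rw [div_le_div_iff₀ a4 a3] at hr
      rw [div_le_div_iff₀ a1 a3]
      linarith
    rw [e, mul_div_assoc, abs_mul, abs_of_pos (div_pos a2 a1)]
    calc _ ≤ |(((d s).2.2 t : ℚ) : ℝ)| * (wprod η t / wprod η m) := by gcongr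
      _ = (|(((d s).2.2 t : ℚ) : ℝ)| * wprod η t) * (1 / wprod η m) := by ring
      _ ≤ _ := by gcongr; exact le_cst _ hη t
  refine ⟨v, c, ?_, ?_, ?_⟩
  · refine summable_of_stage_bounds v (fun s => 4 ^ L s)
      (fun s k h => Nat.pow_lt_pow_right (by norm_num) (hL h))
      (fun s => cst (d s).2.2 (1 + 1 / ((s : ℝ) + 1))) (fun s => 1 + 1 / ((s : ℝ) + 1))
      (fun s => cst_nonneg _ (by positivity)) (fun s => ?_) hbound hL3
    have : (0:ℝ) < 1 / ((s : ℝ) + 1) := by positivity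
    linarith
  · intro i D y μ δ K hμ hδ
    obtain ⟨S1, hS1⟩ := exists_nat_gt μ
    obtain ⟨S2, hS2⟩ := exists_nat_one_div_lt hδ
    obtain ⟨S3, hS3⟩ := exists_nat_one_div_lt (sub_pos.2 hμ)
    obtain ⟨s, hs, hds⟩ := hd (i, D, y) (S1 + S2 + S3 + K)
    have hs1 : (S1 : ℝ) ≤ s := by exact_mod_cast (by omega : S1 ≤ s)
    have es2 : 1 / ((s : ℝ) + 1) ≤ δ := by
      have : (S2 : ℝ) ≤ s := by exact_mod_cast (by omega : S2 ≤ s)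
      refine le_trans ?_ hS2.le
      gcongr
    have es3 : 1 / ((s : ℝ) + 1) ≤ μ - 1 := by
      have : (S3 : ℝ) ≤ s := by exact_mod_cast (by omega : S3 ≤ s)
      refine le_trans ?_ hS3.le
      gcongr
    have hend : (s : ℝ) + 1 ≤ expo s (L s) (L (s + 1)) := hL2 s
    -- the last scale of the stage whose exponent does not exceed `μ`
    have hex : ∃ l', L s ≤ l' ∧ μ < expo s (L s) l' :=
      ⟨L (s + 1), hL.monotone (Nat.le_succ s), by linarith⟩
    obtain ⟨h1, h2⟩ := Nat.find_spec hex
    have hmin : ∀ k, k < Nat.find hex → ¬ (L s ≤ k ∧ μ < expo s (L s) k) :=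
      fun k hk => Nat.find_min hex hk
    have hub : Nat.find hex ≤ L (s + 1) :=
      Nat.find_min' hex ⟨hL.monotone (Nat.le_succ s), by linarith⟩
    generalize Nat.find hex = l' at h1 h2 hmin hub
    have hne : l' ≠ L s := by
      rintro rfl
      have : expo s (L s) (L s) = 1 + 1 / ((s : ℝ) + 1) := by unfold expo; ring
      linarith
    obtain ⟨l, rfl⟩ : ∃ l, l' = l + 1 := ⟨l' - 1, by omega⟩
    have hl : L s ≤ l := by omega
    have hθμ : expo s (L s) l ≤ μ := by
      by_contra! h
      exact hmin l (by omega) ⟨hl, h⟩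
    have hθ0 : 0 ≤ expo s (L s) l := by
      refine le_trans ?_ (le_expo s hl)
      positivity
    refine ⟨l, ?_, expo s (L s) l, hθ0, hθμ, ?_, ?_⟩
    · have : s ≤ L s := hL.le_apply
      omega
    · have hstep : expo s (L s) (l + 1) = expo s (L s) l + 1 / ((s : ℝ) + 1) / ((l : ℝ) + 1) := by
        unfold expo; rw [harm_succ]; ring
      rw [hstep] at h2
      have : μ - expo s (L s) l ≤ 1 / ((s : ℝ) + 1) / ((l : ℝ) + 1) := by linarith
      refine le_trans ?_ es2
      rwa [le_div_iff₀ (by positivity)] at this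
    · intro m hm1 hm2
      have := hv s l m hl (by omega) hm1 hm2
      rw [hds] at this
      exact this
  · intro K
    obtain ⟨s, hs, hds⟩ := hd (0, 0, 0) K
    refine ⟨L s, L (s + 1), hs.trans hL.le_apply, ?_, ?_⟩
    · have := hL1 s; omega
    · intro m h1 h2
      obtain ⟨l, -, e⟩ := hv' s m h1 h2
      rw [e, hds]
      simp

/-! ### Orbits in `ℓ_p` -/

section shift

variable {p : ℝ≥0∞} [Fact (1 ≤ p)]

/-- The part of `x` supported on `[M, ∞)`. -/
noncomputable def tail (M : ℕ) (x : lp (fun _ : ℕ => ℝ) p) : lp (fun _ : ℕ => ℝ) p :=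
  x - ∑ i ∈ Finset.range M, lp.single p i (x i)

lemma sum_single_apply (M : ℕ) (w : ℕ → ℝ) (j : ℕ) :
    (∑ i ∈ Finset.range M, lp.single (E := fun _ : ℕ => ℝ) p i (w i)) j
      = if j < M then w j else 0 := by
  rw [lp.coeFn_sum, Finset.sum_apply]
  simp only [lp.single_apply]
  rw [Finset.sum_pi_single]
  simp

lemma tail_apply (M : ℕ) (x : lp (fun _ : ℕ => ℝ) p) (j : ℕ) :
    tail M x j = if j < M then 0 else x j := by
  have h := sum_single_apply (p := p) M (fun i => x i) j
  rw [tail, lp.coeFn_sub, Pi.sub_apply, h]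
  split_ifs <;> simp

lemma norm_sum_single_le (M : ℕ) (w : ℕ → ℝ) :
    ‖∑ i ∈ Finset.range M, lp.single (E := fun _ : ℕ => ℝ) p i (w i)‖
      ≤ ∑ i ∈ Finset.range M, |w i| := by
  have hp0 : 0 < p := zero_lt_one.trans_le Fact.out
  refine norm_sum_le_of_le _ fun i _ => ?_
  rw [lp.norm_single hp0, Real.norm_eq_abs]

lemma tendsto_tail (hp : p ≠ ∞) (x : lp (fun _ : ℕ => ℝ) p) :
    Tendsto (fun M => ‖tail M x‖) atTop (nhds 0) := by
  have h := (lp.hasSum_single hp x).tendsto_sum_nat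
  have h2 := (tendsto_const_nhds (x := x)).sub h
  rw [sub_self] at h2
  simpa [tail] using h2.norm

/-- Pointwise domination by a backward translate of `g` bounds the norm. -/
lemma norm_le_of_shift (hp : p ≠ ∞) {f g : lp (fun _ : ℕ => ℝ) p} {C : ℝ} (hC : 0 ≤ C) (n : ℕ)
    (h : ∀ j, |f j| ≤ C * |g (n + j)|) : ‖f‖ ≤ C * ‖g‖ := by
  have hp0 : 0 < p.toReal := ENNReal.toReal_pos (zero_lt_one.trans_le Fact.out).ne' hp
  refine lp.norm_le_of_forall_sum_le hp0 (by positivity) fun s => ?_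
  calc ∑ j ∈ s, ‖f j‖ ^ p.toReal ≤ ∑ j ∈ s, C ^ p.toReal * ‖g (n + j)‖ ^ p.toReal := by
        refine Finset.sum_le_sum fun j _ => ?_
        rw [← Real.mul_rpow hC (norm_nonneg _)]
        exact Real.rpow_le_rpow (norm_nonneg _) (h j) hp0.le
    _ = C ^ p.toReal * ∑ k ∈ s.map (addLeftEmbedding n), ‖g k‖ ^ p.toReal := by
        rw [Finset.sum_map, Finset.mul_sum]; rfl
    _ ≤ C ^ p.toReal * ‖g‖ ^ p.toReal := by
        gcongr
        exact lp.sum_rpow_le_norm_rpow hp0 g _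
    _ = (C * ‖g‖) ^ p.toReal := (Real.mul_rpow hC (norm_nonneg _)).symm

/-- Finitely supported rational sequences are dense in `ℓ_p`. -/
lemma exists_rat_approx (hp : p ≠ ∞) (u : lp (fun _ : ℕ => ℝ) p) {r : ℝ} (hr : 0 < r) :
    ∃ (y : ℕ →₀ ℚ) (z : lp (fun _ : ℕ => ℝ) p), (∀ j, z j = (y j : ℝ)) ∧ ‖u - z‖ < r := by
  obtain ⟨M, hM⟩ := ((tendsto_tail hp u).eventually_lt_const (half_pos hr)).exists
  have hδ : 0 < r / 2 / ((M : ℝ) + 1) := by positivity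
  choose q hq1 hq2 using fun i : ℕ => exists_rat_btwn (lt_add_of_pos_right (u i) hδ)
  let y : ℕ →₀ ℚ := Finsupp.onFinset (Finset.range M) (fun i => if i < M then q i else 0)
    (fun i hi => by by_contra h; simp at h; simp [not_lt.2 h] at hi)
  refine ⟨y, ∑ i ∈ Finset.range M, lp.single p i ((q i : ℝ)), fun j => ?_, ?_⟩
  · rw [sum_single_apply M (fun i => (q i : ℝ))]
    simp only [y, Finsupp.onFinset_apply]
    split_ifs <;> simp
  · have e : u - ∑ i ∈ Finset.range M, lp.single (E := fun _ : ℕ => ℝ) p i ((q i : ℝ))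
        = tail M u + ∑ i ∈ Finset.range M, lp.single (E := fun _ : ℕ => ℝ) p i (u i - q i) := by
      ext j
      rw [lp.coeFn_sub, Pi.sub_apply, lp.coeFn_add, Pi.add_apply, tail_apply,
        sum_single_apply M (fun i => (q i : ℝ)), sum_single_apply M (fun i => u i - (q i : ℝ))]
      split_ifs <;> simp
    have h2 : ∑ i ∈ Finset.range M, |u i - q i| ≤ r / 2 := by
      calc ∑ i ∈ Finset.range M, |u i - q i| ≤ ∑ i ∈ Finset.range M, r / 2 / ((M : ℝ) + 1) := by
            refine Finset.sum_le_sum fun i _ => ?_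
            rw [abs_le]
            constructor <;> linarith [hq1 i, hq2 i]
        _ = r / 2 * (M / ((M : ℝ) + 1)) := by
            rw [Finset.sum_const, Finset.card_range, nsmul_eq_mul]; ring
        _ ≤ r / 2 := by
            apply mul_le_of_le_one_right (by positivity)
            rw [div_le_one (by positivity)]; linarith
    rw [e]
    refine (norm_add_le _ _).trans_lt ?_
    have := norm_sum_single_le (p := p) M (fun i => u i - (q i : ℝ))
    linarith

lemma shift_pow_apply {μ : ℝ} (hμ : 0 ≤ μ) {T : lp (fun _ : ℕ => ℝ) p →L[ℝ] lp (fun _ : ℕ => ℝ) p}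
    (hT : ∀ (x : lp (fun _ : ℕ => ℝ) p) (n : ℕ), (T x) n = (1 + μ / ((n : ℝ) + 1)) * x (n + 1))
    (x : lp (fun _ : ℕ => ℝ) p) (n j : ℕ) :
    (T ^ n) x j = wprod μ (n + j) / wprod μ j * x (n + j) := by
  induction n generalizing j with
  | zero => simp [div_self (wprod_pos hμ j).ne']
  | succ n ih =>
    have h := wprod_pos hμ j
    have h0 : 0 < 1 + μ / ((j : ℝ) + 1) := by positivity
    rw [pow_succ', mul_apply_eq_comp, hT, ih, wprod_succ μ j,
      show n + 1 + j = n + (j + 1) by ring]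
    field_simp

/-- If `x` is on the scale `[4^l, 4^(l+1))` the periodic pull-back of a multiple of `y` by `B_θ`,
then `B_μ^n x` is close to that multiple of `y` for every multiple `n` of the period in
`[4^l, 2 * 4^l]`: the three error terms come from the coordinates of `x` beyond the scale, from
the discrepancy between `θ` and `μ`, and from the later copies of `y` in the scale. -/
lemma block_estimate (hp : p ≠ ∞) {μ θ κ a : ℝ} (hμ : 1 < μ) (hθ : 0 ≤ θ) (hθμ : θ ≤ μ)
    {T : lp (fun _ : ℕ => ℝ) p →L[ℝ] lp (fun _ : ℕ => ℝ) p}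
    (hT : ∀ (x : lp (fun _ : ℕ => ℝ) p) (n : ℕ), (T x) n = (1 + μ / ((n : ℝ) + 1)) * x (n + 1))
    {l D n : ℕ} {y : ℕ →₀ ℚ} (hD : D ≤ 4 ^ l) (hy : ∀ j, D ≤ j → y j = 0)
    (hκ : (μ - θ) * (4 * ((l : ℝ) + 1)) ≤ κ) {x z : lp (fun _ : ℕ => ℝ) p}
    (hx : ∀ m, 4 ^ l ≤ m → m < 4 ^ (l + 1) →
      x m = a * ((y (m % D) : ℝ) * wprod θ (m % D) / wprod θ m))
    (hz : ∀ j, z j = (y j : ℝ)) (hn1 : 4 ^ l ≤ n) (hn2 : n ≤ 2 * 4 ^ l) (hDn : D ∣ n) :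
    ‖(T ^ n) x - a • z‖ ≤ Real.exp μ * ‖tail (4 ^ (l + 1)) x‖
      + |a| * ((Real.exp κ - 1) * ∑ j ∈ Finset.range D, |(y j : ℝ)|
        + Real.exp κ * cst y μ * ∑' j, 1 / wprod μ (j + D)) := by
  have hμ0 : 0 ≤ μ := by linarith
  have h4 : 4 ^ (l + 1) = 4 * 4 ^ l := by ring
  obtain ⟨K, hK⟩ : ∃ K, n + K = 4 ^ (l + 1) := ⟨4 ^ (l + 1) - n, by omega⟩
  have hDK : D ≤ K := by omega
  set w : ℕ → ℝ := fun j => (T ^ n) x j - a * (y j : ℝ) with hw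
  have e : (T ^ n) x - a • z = tail K ((T ^ n) x) + ∑ j ∈ Finset.range K, lp.single p j (w j) := by
    ext j
    rw [lp.coeFn_sub, Pi.sub_apply, lp.coeFn_smul, Pi.smul_apply, hz, lp.coeFn_add, Pi.add_apply,
      tail_apply, sum_single_apply K w, smul_eq_mul]
    split_ifs with h
    · simp [hw]
    · rw [hy j (by omega)]; simp
  have b1 : ‖tail K ((T ^ n) x)‖ ≤ Real.exp μ * ‖tail (4 ^ (l + 1)) x‖ := by
    refine norm_le_of_shift hp (Real.exp_pos _).le n fun j => ?_
    rw [tail_apply, tail_apply]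
    by_cases h : j < K
    · rw [if_pos h]; simp; positivity
    · rw [if_neg h, if_neg (by omega), shift_pow_apply hμ0 hT, abs_mul]
      have hj := wprod_pos hμ0 j
      have hnj := wprod_pos hμ0 (n + j)
      rw [abs_of_pos (div_pos hnj hj)]
      gcongr
      rw [div_le_iff₀ hj]
      exact wprod_add_le hμ0 (by omega)
  -- the quotients of weight products for the two parameters are at most `exp κ` on the scale
  have hR : ∀ j, j < K → wprod μ (n + j) / wprod θ (n + j) ≤ Real.exp κ := by
    intro j hj
    refine (ratio_le hθ hθμ _).trans (Real.exp_le_exp.2 (le_trans ?_ hκ))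
    apply mul_le_mul_of_nonneg_left _ (sub_nonneg.2 hθμ)
    have h1 := harm_four_pow (l + 1)
    have h2 := harm_mono (show n + j ≤ 4 ^ (l + 1) by omega)
    push_cast at h1
    linarith
  have hval : ∀ j, j < K → (T ^ n) x j = a * ((wprod μ (n + j) / wprod θ (n + j)) *
      ((y (j % D) : ℝ) * wprod θ (j % D)) / wprod μ j) := by
    intro j hj
    obtain ⟨k, rfl⟩ := hDn
    rw [shift_pow_apply hμ0 hT, hx _ (by omega) (by omega), Nat.mul_add_mod]
    ring
  have c1 : ∀ j < D, |w j| ≤ |a| * ((Real.exp κ - 1) * |(y j : ℝ)|) := by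
    intro j hj
    have hjK : j < K := hj.trans_le hDK
    have p1 := wprod_pos hμ0 j
    have p2 := wprod_pos hθ j
    have r1 := one_le_ratio hθ hθμ j
    have r2 : wprod μ j / wprod θ j ≤ wprod μ (n + j) / wprod θ (n + j) :=
      ratio_mono hθ hθμ (Nat.le_add_left j n)
    have r3 := hR j hjK
    have e1 : w j = a * (((wprod μ (n + j) / wprod θ (n + j)) / (wprod μ j / wprod θ j) - 1)
        * (y j : ℝ)) := by
      simp only [hw]
      rw [hval j hjK, Nat.mod_eq_of_lt hj]
      field_simp
    rw [e1, abs_mul, abs_mul]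
    gcongr
    rw [abs_of_nonneg]
    · gcongr
      exact (div_le_self (by linarith) r1).trans r3
    · rw [sub_nonneg, one_le_div (by linarith)]
      exact r2
  have c2 : ∀ j, D ≤ j → j < K → |w j| ≤ |a| * (Real.exp κ * cst y μ * (1 / wprod μ j)) := by
    intro j hj hjK
    have p1 := wprod_pos hμ0 j
    have p2 := wprod_pos hθ (j % D)
    have p3 := wprod_pos hμ0 (j % D)
    have r0 := one_le_ratio hθ hθμ (n + j)
    have r1 := one_le_ratio hθ hθμ (j % D)
    rw [one_le_div p2] at r1
    have e1 : w j = a * ((wprod μ (n + j) / wprod θ (n + j)) *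
      ((y (j % D) : ℝ) * wprod θ (j % D)) * (1 / wprod μ j)) := by
      simp only [hw]
      rw [hval j hjK, hy j hj, Rat.cast_zero, mul_zero, sub_zero]
      ring
    rw [e1, abs_mul, abs_mul, abs_mul, abs_mul, abs_of_nonneg (by linarith : 0 ≤ _ / wprod θ _),
      abs_of_pos p2, abs_of_pos (one_div_pos.2 p1)]
    gcongr
    · exact hR j hjK
    · exact (mul_le_mul_of_nonneg_left r1 (abs_nonneg _)).trans (le_cst y hμ0 _)
  have b2 : ∑ j ∈ Finset.range K, |w j| ≤ |a| * ((Real.exp κ - 1) *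
      ∑ j ∈ Finset.range D, |(y j : ℝ)| + Real.exp κ * cst y μ * ∑' j, 1 / wprod μ (j + D)) := by
    rw [← Finset.sum_range_add_sum_Ico _ hDK, mul_add]
    apply add_le_add
    · rw [Finset.mul_sum, Finset.mul_sum]
      exact Finset.sum_le_sum fun j hj => c1 j (Finset.mem_range.1 hj)
    · refine (Finset.sum_le_sum fun j hj =>
        c2 j (Finset.mem_Ico.1 hj).1 (Finset.mem_Ico.1 hj).2).trans ?_
      rw [← Finset.mul_sum, ← Finset.mul_sum, Finset.sum_Ico_eq_sum_range]
      simp_rw [add_comm D]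
      have h := (summable_nat_add_iff D).2 (summable_inv_wprod hμ)
      have := cst_nonneg y hμ0
      gcongr
      exact h.sum_le_tsum _ fun m _ => (one_div_pos.2 (wprod_pos hμ0 _)).le
  rw [e]
  exact (norm_add_le _ _).trans (add_le_add b1 ((norm_sum_single_le K w).trans b2))

end shift

/-! ### Densities -/

lemma density_bounds (A : Set ℕ) (N : ℕ) : 0 ≤ ((A ∩ Set.Iic N).ncard : ℝ) / (N + 1) ∧
    ((A ∩ Set.Iic N).ncard : ℝ) / (N + 1) ≤ 1 := by
  refine ⟨by positivity, ?_⟩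
  rw [div_le_one (by positivity)]
  have h := Set.ncard_le_ncard (Set.inter_subset_right (s := A) (t := Set.Iic N))
    (Set.finite_Iic N)
  have h2 : (Set.Iic N).ncard = N + 1 := by
    rw [← Finset.coe_Iic, Set.ncard_coe_finset, Nat.card_Iic]
  rw [h2] at h
  exact_mod_cast h

/-- A set that contains, for infinitely many `l`, all multiples of `D` in `[4^l, 2 * 4^l]` has
upper density at least `1 / (4 * D)`. -/
lemma upperDensity_pos {A : Set ℕ} {D : ℕ} (hD : 0 < D)
    (h : ∀ K : ℕ, ∃ l ≥ K, ∀ n, 4 ^ l ≤ n → n ≤ 2 * 4 ^ l → D ∣ n → n ∈ A) :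
    0 < upperDensity A := by
  have hD' : (0:ℝ) < D := by exact_mod_cast hD
  refine lt_of_lt_of_le (by positivity : (0:ℝ) < 1 / (4 * D)) ?_
  refine le_limsup_of_frequently_le ?_
    (isBoundedUnder_of ⟨1, fun N => (density_bounds A N).2⟩)
  rw [frequently_atTop]
  intro K
  obtain ⟨l, hl, hA⟩ := h (K + D)
  have hlt : l < 4 ^ l := Nat.lt_pow_self (by norm_num)
  refine ⟨2 * 4 ^ l, by omega, ?_⟩
  obtain ⟨q, hq⟩ : ∃ q, q = 4 ^ l / D := ⟨_, rfl⟩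
  have hq1 : D * q ≤ 4 ^ l := by rw [hq]; exact Nat.mul_div_le _ _
  have hq2 : 4 ^ l < D * q + D := by
    have := Nat.lt_mul_div_succ (4 ^ l) hD
    rw [← hq] at this
    linarith
  have hq3 : 1 ≤ q := by rw [hq, Nat.one_le_div_iff hD]; omega
  -- the multiples `D * k` with `q < k ≤ 2 * q` lie in the window
  have hsub : (fun k => D * k) '' (Finset.Ioc q (2 * q) : Set ℕ) ⊆ A ∩ Set.Iic (2 * 4 ^ l) := by
    rintro _ ⟨k, hk, rfl⟩
    obtain ⟨k1, k2⟩ := Finset.mem_Ioc.1 (Finset.mem_coe.1 hk)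
    have a1 : D * (q + 1) ≤ D * k := Nat.mul_le_mul_left D k1
    have a2 : D * k ≤ D * (2 * q) := Nat.mul_le_mul_left D k2
    have a3 : D * (2 * q) = 2 * (D * q) := by ring
    have a4 : D * (q + 1) = D * q + D := by ring
    exact ⟨hA _ (by show _ ≤ D * k; omega) (by show D * k ≤ _; omega) (Dvd.intro _ rfl),
      by show D * k ≤ _; omega⟩
  have hcard : q ≤ (A ∩ Set.Iic (2 * 4 ^ l)).ncard := by
    have h1 := Set.ncard_le_ncard hsub ((Set.finite_Iic _).inter_of_right _)
    rw [Set.ncard_image_of_injective _ (fun a b hab => Nat.eq_of_mul_eq_mul_left hD hab),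
      Set.ncard_coe_finset, Nat.card_Ioc] at h1
    omega
  have hq4 : 2 * 4 ^ l + 1 ≤ 4 * (D * q) := by
    have : D * 1 ≤ D * q := Nat.mul_le_mul_left D hq3
    omega
  rw [div_le_div_iff₀ (by positivity) (by positivity), one_mul]
  have c1 : (2 * 4 ^ l + 1 : ℝ) ≤ 4 * (D * q) := by exact_mod_cast hq4
  have c2 : (q : ℝ) ≤ ((A ∩ Set.Iic (2 * 4 ^ l)).ncard : ℝ) := by exact_mod_cast hcard
  push_cast
  nlinarith

/-- A set with arbitrarily long (on the logarithmic scale) gaps has lower density zero. -/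
lemma lowerDensity_not_pos {A : Set ℕ}
    (h : ∀ K : ℕ, ∃ a b, K ≤ a ∧ a + K ≤ b ∧ ∀ m, 4 ^ a ≤ m → m < 4 ^ b → m ∉ A) :
    ¬ 0 < lowerDensity A := by
  intro hpos
  have hev := eventually_lt_of_lt_liminf (half_lt_self hpos)
    (isBoundedUnder_of ⟨0, fun N => (density_bounds A N).1⟩)
  obtain ⟨N0, hN0⟩ := eventually_atTop.1 hev
  obtain ⟨k, hk⟩ := exists_pow_lt_of_lt_one (half_pos hpos) (by norm_num : (1 / 4 : ℝ) < 1)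
  obtain ⟨a, b, ha, hab, hA⟩ := h (N0 + k)
  have hb : 0 < 4 ^ b := by positivity
  have hblt : b < 4 ^ b := Nat.lt_pow_self (by norm_num)
  have h1 := hN0 (4 ^ b - 1) (by omega)
  have hsub : A ∩ Set.Iic (4 ^ b - 1) ⊆ (Finset.range (4 ^ a) : Set ℕ) := by
    rintro m ⟨hm, hm2⟩
    rw [Finset.coe_range]
    by_contra hc
    have hm3 : m ≤ 4 ^ b - 1 := hm2
    have hc' : ¬ m < 4 ^ a := hc
    exact hA m (by omega) (by omega) hm
  have hcard := Set.ncard_le_ncard hsub (Finset.finite_toSet _)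
  rw [Set.ncard_coe_finset, Finset.card_range] at hcard
  have hcast : ((4 ^ b - 1 : ℕ) : ℝ) + 1 = 4 ^ b := by
    rw [Nat.cast_sub hb]; push_cast; ring
  rw [hcast] at h1
  have h2 : ((A ∩ Set.Iic (4 ^ b - 1)).ncard : ℝ) ≤ 4 ^ a := by exact_mod_cast hcard
  have h3 : ((A ∩ Set.Iic (4 ^ b - 1)).ncard : ℝ) / 4 ^ b ≤ (1 / 4) ^ k := by
    rw [div_le_iff₀ (by positivity)]
    refine h2.trans ?_
    calc (4:ℝ) ^ a = (1 / 4) ^ k * 4 ^ (a + k) := by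
          rw [pow_add, one_div, inv_pow]; field_simp
      _ ≤ (1 / 4) ^ k * 4 ^ b := by
          gcongr
          · norm_num
          · omega
  change lowerDensity A / 2 < _ at h1
  linarith

/-! ### The subspace -/

/-- Theorem 1.3. Let `1 ≤ p < ∞` and, for each `μ > 1`, let `B μ` be
the unilateral weighted backward shift on `ℓ_p` with weight `w_μ = (1 + μ/n)_{n ≥ 1}`
(coordinate `n` corresponds to the paper's position `n+1`, so
`(B_{w_μ} x)_n = (1 + μ/(n+1)) x_{n+1}`). Then there exists a closed
infinite-dimensional subspace `Y` of `ℓ_p` all of whose nonzero vectors are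
`𝒰`-frequently hypercyclic for `B μ` for every `μ > 1`, and none of whose vectors is
frequently hypercyclic for `B μ` for any `μ > 1`. -/
theorem exists_common_uFreqHypercyclic_subspace (p : ℝ≥0∞) [Fact (1 ≤ p)] (hp : p ≠ ∞)
    (B : ℝ → (lp (fun _ : ℕ => ℝ) p →L[ℝ] lp (fun _ : ℕ => ℝ) p))
    (hB : ∀ μ : ℝ, 1 < μ → ∀ (x : lp (fun _ : ℕ => ℝ) p) (n : ℕ),
      (B μ x) n = (1 + μ / ((n : ℝ) + 1)) * x (n + 1)) :
    ∃ Y : Submodule ℝ (lp (fun _ : ℕ => ℝ) p),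
      IsClosed (Y : Set (lp (fun _ : ℕ => ℝ) p)) ∧ ¬ FiniteDimensional ℝ Y ∧
      (∀ x ∈ Y, x ≠ 0 → ∀ μ : ℝ, 1 < μ → IsUFreqHypercyclicVector (B μ) x) ∧
      ∀ x ∈ Y, ∀ μ : ℝ, 1 < μ → ¬ IsFreqHypercyclicVector (B μ) x := by
  obtain ⟨v, c, hsum, hpat, hgap⟩ := exists_pattern
  -- the sequences that are, on each colour class, a multiple of `v`
  let Y : Submodule ℝ (lp (fun _ : ℕ => ℝ) p) :=
    { carrier := {x | (∀ m, v m = 0 → x m = 0) ∧ ∀ m m', c m = c m' → x m * v m' = x m' * v m}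
      add_mem' := by
        rintro x x' ⟨h1, h2⟩ ⟨h3, h4⟩
        refine ⟨fun m hm => ?_, fun m m' hm => ?_⟩
        · rw [lp.coeFn_add, Pi.add_apply, h1 m hm, h3 m hm, add_zero]
        · rw [lp.coeFn_add, Pi.add_apply, Pi.add_apply, add_mul, add_mul, h2 m m' hm, h4 m m' hm]
      zero_mem' := by
        refine ⟨fun m hm => ?_, fun m m' hm => ?_⟩ <;> simp
      smul_mem' := by
        rintro a x ⟨h1, h2⟩
        refine ⟨fun m hm => ?_, fun m m' hm => ?_⟩
        · rw [lp.coeFn_smul, Pi.smul_apply, h1 m hm, smul_zero]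
        · rw [lp.coeFn_smul, Pi.smul_apply, Pi.smul_apply, smul_mul_assoc, smul_mul_assoc,
            h2 m m' hm] }
  have hY : ∀ x, x ∈ Y ↔ (∀ m, v m = 0 → x m = 0) ∧
      ∀ m m', c m = c m' → x m * v m' = x m' * v m := fun x => Iff.rfl
  refine ⟨Y, ?_, ?_, ?_, ?_⟩
  · have hc : ∀ m, Continuous fun x : lp (fun _ : ℕ => ℝ) p => x m := fun m =>
      (continuous_apply m).comp lp.uniformContinuous_coe.continuous
    have e : (Y : Set (lp (fun _ : ℕ => ℝ) p)) = (⋂ m, ⋂ (_ : v m = 0), {x | x m = 0}) ∩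
        ⋂ m, ⋂ m', ⋂ (_ : c m = c m'), {x | x m * v m' = x m' * v m} := by
      ext x
      simp only [SetLike.mem_coe, hY, Set.mem_inter_iff, Set.mem_iInter, Set.mem_ofPred_eq]
    rw [e]
    refine IsClosed.inter ?_ ?_
    · exact isClosed_iInter fun m => isClosed_iInter fun _ => isClosed_eq (hc m) continuous_const
    · exact isClosed_iInter fun m => isClosed_iInter fun m' => isClosed_iInter fun _ =>
        isClosed_eq ((hc m).mul continuous_const) ((hc m').mul continuous_const)
  · -- the restrictions of `v` to its colour classes are linearly independent elements of `Y`
    intro hfin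
    have hne : ∀ i, ∃ m, c m = i ∧ v m ≠ 0 := by
      intro i
      obtain ⟨l, -, θ, hθ, -, -, h⟩ :=
        hpat i 1 (Finsupp.single 0 1) 2 1 0 (by norm_num) (by norm_num)
      obtain ⟨h1, h2⟩ := h (4 ^ l) le_rfl (Nat.pow_lt_pow_right (by norm_num) (Nat.lt_succ_self l))
      refine ⟨4 ^ l, h1, ?_⟩
      rw [h2, Nat.mod_one]
      simpa [wprod_zero] using (wprod_pos hθ _).ne'
    choose k hk1 hk2 using hne
    have hmem : ∀ i, Memℓp (E := fun _ : ℕ => ℝ) (fun m => if c m = i then v m else 0) p := by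
      intro i
      refine Memℓp.of_exponent_ge (q := 1) (memℓp_gen ?_) Fact.out
      refine hsum.of_nonneg_of_le (fun m => by positivity) fun m => ?_
      split_ifs <;> simp
    let f : ℕ → lp (fun _ : ℕ => ℝ) p := fun i => ⟨_, hmem i⟩
    have hf : ∀ i m, f i m = if c m = i then v m else 0 := fun i m => rfl
    have hfY : ∀ i, f i ∈ Y := by
      intro i
      rw [hY]
      refine ⟨fun m hm => by rw [hf, hm, ite_self], fun m m' h => ?_⟩
      rw [hf, hf, h]
      split_ifs <;> ring
    have hli : LinearIndependent ℝ fun i => (⟨f i, hfY i⟩ : Y) := by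
      rw [linearIndependent_iff']
      intro s g hg i hi
      have h1 : ∑ j ∈ s, g j • f j = 0 := by
        have := congrArg (Submodule.subtype Y) hg
        simpa using this
      have h2 := congrArg (fun x : lp (fun _ : ℕ => ℝ) p => x (k i)) h1
      simp only [lp.coeFn_sum, Finset.sum_apply, lp.coeFn_smul, Pi.smul_apply, hf, hk1,
        smul_eq_mul, mul_ite, mul_zero, lp.coeFn_zero, Pi.zero_apply] at h2
      rw [Finset.sum_ite_eq, if_pos hi] at h2
      exact (mul_eq_zero.1 h2).resolve_right (hk2 i)
    exact not_finite_iff_infinite.2 inferInstance hli.finite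
  · intro x hx hx0 μ hμ U hU ⟨u, hu⟩
    rw [hY] at hx
    obtain ⟨hx1, hx2⟩ := hx
    have hμ0 : 0 ≤ μ := by linarith
    -- on some colour class, `x` is a nonzero multiple of `v`
    obtain ⟨m0, hm0⟩ : ∃ m, x m ≠ 0 := by
      by_contra! h
      exact hx0 (lp.ext (funext h))
    have hv0 : v m0 ≠ 0 := fun h => hm0 (hx1 m0 h)
    obtain ⟨a, ha⟩ : ∃ a, a = x m0 / v m0 := ⟨_, rfl⟩
    have ha0 : a ≠ 0 := by rw [ha]; exact div_ne_zero hm0 hv0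
    have hxv : ∀ m, c m = c m0 → x m = a * v m := by
      intro m hm
      have := hx2 m m0 hm
      rw [ha]
      field_simp
      linarith
    have ha' : 0 < |a| := abs_pos.2 ha0
    obtain ⟨r, hr, hball⟩ := Metric.isOpen_iff.1 hU u hu
    obtain ⟨y, z, hz, hyz⟩ := exists_rat_approx hp (a⁻¹ • u) (by positivity : 0 < r / 4 / |a|)
    have huz : ‖u - a • z‖ < r / 4 := by
      have : u - a • z = a • (a⁻¹ • u - z) := by rw [smul_sub, smul_inv_smul₀ ha0]
      rw [this, norm_smul, Real.norm_eq_abs]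
      rw [lt_div_iff₀ ha'] at hyz
      linarith
    -- the period is chosen so that the copies of `y` beyond the first are negligible
    obtain ⟨D, hD0, hDy, hDs⟩ : ∃ D : ℕ, 0 < D ∧ (∀ j, D ≤ j → y j = 0) ∧
        |a| * (2 * cst y μ * ∑' j, 1 / wprod μ (j + D)) < r / 4 := by
      have h1 := (tendsto_sum_nat_add fun m => 1 / wprod μ m).const_mul (|a| * (2 * cst y μ))
      rw [mul_zero] at h1
      have e1 := h1.eventually_lt_const (by positivity : 0 < r / 4)
      have e2 : ∀ᶠ D : ℕ in atTop, 0 < D := eventually_gt_atTop 0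
      have e3 : ∀ᶠ D : ℕ in atTop, y.support.sup id < D := eventually_gt_atTop _
      obtain ⟨D, d1, d2, d3⟩ := (e1.and (e2.and e3)).exists
      refine ⟨D, d2, fun j hj => ?_, by rw [← mul_assoc]; exact d1⟩
      by_contra hne
      have : id j ≤ y.support.sup id := Finset.le_sup (Finsupp.mem_support_iff.2 hne)
      simp only [id] at this
      omega
    obtain ⟨κ, hκ0, hκ1, hκ2⟩ : ∃ κ : ℝ, 0 < κ ∧ Real.exp κ ≤ 2 ∧
        |a| * ((Real.exp κ - 1) * ∑ j ∈ Finset.range D, |(y j : ℝ)|) < r / 4 := by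
      have h1 : Tendsto Real.exp (nhdsWithin 0 (Set.Ioi 0)) (nhds 1) := by
        have := Real.continuous_exp.tendsto 0
        rw [Real.exp_zero] at this
        exact this.mono_left nhdsWithin_le_nhds
      have h2 := ((h1.sub_const 1).mul_const (∑ j ∈ Finset.range D, |(y j : ℝ)|)).const_mul |a|
      rw [sub_self, zero_mul, mul_zero] at h2
      have e1 := h2.eventually_lt_const (by positivity : 0 < r / 4)
      have e2 := h1.eventually_le_const (by norm_num : (1:ℝ) < 2)
      have e3 : ∀ᶠ κ : ℝ in nhdsWithin 0 (Set.Ioi 0), 0 < κ := eventually_mem_nhdsWithin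
      obtain ⟨κ, k1, k2, k3⟩ := (e1.and (e2.and e3)).exists
      exact ⟨κ, k3, k2, k1⟩
    obtain ⟨M, hM⟩ : ∃ M, ∀ N ≥ M, Real.exp μ * ‖tail N x‖ < r / 4 := by
      have h1 := (tendsto_tail hp x).const_mul (Real.exp μ)
      rw [mul_zero] at h1
      exact eventually_atTop.1 (h1.eventually_lt_const (by positivity : 0 < r / 4))
    refine upperDensity_pos hD0 fun K => ?_
    obtain ⟨l, hl, θ, hθ, hθμ, hκ, hpl⟩ :=
      hpat (c m0) D y μ (κ / 4) (K + D + M) hμ (by positivity)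
    have hlt : l < 4 ^ l := Nat.lt_pow_self (by norm_num)
    have hle : 4 ^ l ≤ 4 ^ (l + 1) := Nat.pow_le_pow_right (by norm_num) (Nat.le_succ l)
    refine ⟨l, by omega, fun n hn1 hn2 hDn => hball ?_⟩
    have hest := block_estimate hp hμ hθ hθμ (hB μ hμ) (a := a) (κ := κ) (x := x) (z := z)
      (by omega) hDy (by linarith)
      (fun m h1 h2 => by rw [hxv m (hpl m h1 h2).1, (hpl m h1 h2).2]) hz hn1 hn2 hDn
    have h1 := hM (4 ^ (l + 1)) (by omega)
    have h2 : |a| * (Real.exp κ * cst y μ * ∑' j, 1 / wprod μ (j + D)) < r / 4 := by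
      refine lt_of_le_of_lt ?_ hDs
      have := cst_nonneg y hμ0
      have : 0 ≤ ∑' j, 1 / wprod μ (j + D) :=
        tsum_nonneg fun j => (one_div_pos.2 (wprod_pos hμ0 _)).le
      gcongr
    rw [mul_add] at hest
    rw [mem_ball_iff_norm]
    have h3 := norm_sub_le_norm_sub_add_norm_sub ((B μ ^ n) x) (a • z) u
    rw [norm_sub_rev (a • z) u] at h3
    linarith
  · intro x hx μ hμ hfreq
    rw [hY] at hx
    have hμ0 : 0 ≤ μ := by linarith
    have hc0 : Continuous fun x : lp (fun _ : ℕ => ℝ) p => x 0 :=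
      (continuous_apply 0).comp lp.uniformContinuous_coe.continuous
    -- an orbit visits the vectors with nonvanishing first coordinate only at times in the
    -- support of `v`
    have h := hfreq {z | z 0 ≠ 0} (isOpen_ne_fun hc0 continuous_const)
      ⟨lp.single p 0 1, by
        show lp.single (E := fun _ : ℕ => ℝ) p 0 1 0 ≠ 0
        rw [lp.single_apply_self]; exact one_ne_zero⟩
    refine lowerDensity_not_pos (fun K => ?_) h
    obtain ⟨a, b, h1, h2, h3⟩ := hgap K
    refine ⟨a, b, h1, h2, fun m h4 h5 h6 => h6 ?_⟩
    rw [shift_pow_apply hμ0 (hB μ hμ), add_zero, hx.1 m (h3 m h4 h5), mul_zero]
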